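/- arXiv:1505.04520 — 3 statements merged into one kernel-verified Lean document; each statement's English description precedes it below -/
import Mathlib

section
/- For positive semidefinite operators A and B on a Hilbert space, the operator norm satisfies ‖A B‖ ≤ (1/4) ‖A + B‖². -/
/-!
For arbitrary elements `k`, `l` of a C⋆-algebra, polarization gives
`4 ℜ (k * l) = |k + l⋆|² - |k - l⋆|² ≤ ‖k + l⋆‖²`, where `|x|² = x * x⋆`, so every point of the
spectrum of `k * l` has real part at most `‖k + l⋆‖² / 4`. To bound `‖c‖`, whose square lies in the
spectrum of `c * c⋆`, one factors `c * c⋆ = u * v` so that `v * u`, which has the same nonzero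
spectrum, equals `k * l` with a useful `k + l⋆`. Writing `a = p⋆ * p`, `b = q * q⋆` and
`a + b = w⋆ * w`, two such rearrangements give `‖a * b‖ ≤ ‖p * (a + b) * q‖ / 2` and
`‖p * (a + b) * q‖ = ‖(p * w⋆) * (w * q)‖ ≤ ‖w * (a + b) * w⋆‖ / 2 = ‖a + b‖² / 2`.
-/

open ComplexStarModule

lemma algebraMap_sq_le_star_mul_self {A : Type*} [Ring A] [StarRing A] [Algebra ℂ A]
    [StarModule ℂ A] [PartialOrder A] [StarOrderedRing A] {x : A} {ε : ℝ} (hε : 0 ≤ ε)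
    (hx : algebraMap ℝ A ε ≤ ℜ x) : algebraMap ℝ A (ε ^ 2) ≤ star x * x := by
  have expansion : star x * x - algebraMap ℝ A (ε ^ 2) =
      star (x - algebraMap ℝ A ε) * (x - algebraMap ℝ A ε) +
        (2 * ε) • ((ℜ x : A) - algebraMap ℝ A ε) := by
    simp only [realPart_apply_coe, Algebra.algebraMap_eq_smul_one, star_sub, star_smul, star_one,
      star_trivial, sub_mul, mul_sub, smul_mul_assoc, mul_smul_comm, one_mul, mul_one]
    module
  rw [← sub_nonneg, expansion]
  exact add_nonneg (star_mul_self_nonneg _) (smul_nonneg (by positivity) (sub_nonneg.2 hx))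

section Unital

variable {A : Type*} [CStarAlgebra A] [PartialOrder A] [StarOrderedRing A]

lemma isUnit_of_algebraMap_le_realPart {x : A} {ε : ℝ} (hε : 0 < ε)
    (hx : algebraMap ℝ A ε ≤ ℜ x) : IsUnit x := by
  have isUnit_star_mul_self {y : A} (hy : algebraMap ℝ A ε ≤ ℜ y) : IsUnit (star y * y) :=
    CStarAlgebra.isUnit_of_le _ (algebraMap_sq_le_star_mul_self hε.le hy)
      (isStrictlyPositive_algebraMap (by positivity))
  have hx_star : algebraMap ℝ A ε ≤ ℜ (star x) := by
    rwa [realPart_apply_coe, star_star, add_comm, ← realPart_apply_coe]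
  obtain ⟨y, hy⟩ := (isUnit_star_mul_self hx).exists_left_inv
  obtain ⟨z, hz⟩ := (isUnit_star_mul_self hx_star).exists_right_inv
  rw [star_star] at hz
  exact isUnit_iff_exists_and_exists.2
    ⟨⟨star x * z, by rw [← mul_assoc, hz]⟩, ⟨y * star x, by rw [mul_assoc, hy]⟩⟩

lemma re_le_of_mem_spectrum_of_realPart_le {x : A} {c : ℝ} (hx : ℜ x ≤ algebraMap ℝ A c) {z : ℂ}
    (hz : z ∈ spectrum ℂ x) : z.re ≤ c := by
  contrapose! hz
  refine spectrum.notMem_iff.2 (isUnit_of_algebraMap_le_realPart (sub_pos.2 hz) ?_)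
  have realPart_sub : (ℜ (algebraMap ℂ A z - x) : A) = algebraMap ℝ A z.re - ℜ x := by
    simp [Algebra.algebraMap_eq_smul_one, realPart_smul]
  rw [realPart_sub, map_sub]
  gcongr

lemma realPart_mul_le_algebraMap_norm_add_star_sq (k l : A) :
    ℜ (k * l) ≤ algebraMap ℝ A (‖k + star l‖ ^ 2 / 4) := by
  have polarization : (ℜ (k * l) : A) = (4⁻¹ : ℝ) • ((k + star l) * star (k + star l)) -
      (4⁻¹ : ℝ) • ((k - star l) * star (k - star l)) := by
    simp only [realPart_apply_coe, star_mul, star_add, star_sub, star_star, add_mul, mul_add,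
      sub_mul, mul_sub]
    module
  calc (ℜ (k * l) : A) ≤ (4⁻¹ : ℝ) • ((k + star l) * star (k + star l)) := by
        rw [polarization]
        exact sub_le_self _ (smul_nonneg (by norm_num) (mul_star_self_nonneg _))
    _ ≤ (4⁻¹ : ℝ) • algebraMap ℝ A (‖k + star l‖ ^ 2) := by
        gcongr
        exact CStarAlgebra.mul_star_le_algebraMap_norm_sq
    _ = algebraMap ℝ A (‖k + star l‖ ^ 2 / 4) := by
        rw [Algebra.smul_def, ← map_mul, inv_mul_eq_div]

end Unital

section NonUnital

variable {A : Type*} [NonUnitalCStarAlgebra A]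

lemma re_le_of_mem_quasispectrum_mul {k l : A} {z : ℂ} (hz : z ∈ quasispectrum ℂ (k * l)) :
    z.re ≤ ‖k + star l‖ ^ 2 / 4 := by
  let : PartialOrder (Unitization ℂ A) := CStarAlgebra.spectralOrder _
  have : StarOrderedRing (Unitization ℂ A) := CStarAlgebra.spectralOrderedRing _
  rw [Unitization.quasispectrum_eq_spectrum_inr, Unitization.inr_mul] at hz
  have h := re_le_of_mem_spectrum_of_realPart_le
    (realPart_mul_le_algebraMap_norm_add_star_sq _ _) hz
  rwa [← Unitization.inr_star, ← Unitization.inr_add, Unitization.norm_inr] at h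

lemma norm_sq_mem_quasispectrum_mul_star_self (c : A) :
    ((‖c‖ ^ 2 : ℝ) : ℂ) ∈ quasispectrum ℂ (c * star c) := by
  let : PartialOrder (Unitization ℂ A) := CStarAlgebra.spectralOrder _
  have : StarOrderedRing (Unitization ℂ A) := CStarAlgebra.spectralOrderedRing _
  have h := spectrum.algebraMap_mem ℂ <|
    CStarAlgebra.norm_mem_spectrum_of_nonneg (mul_star_self_nonneg (c : Unitization ℂ A))
  rwa [CStarRing.norm_self_mul_star, Unitization.norm_inr, ← sq, ← Unitization.inr_star,
    ← Unitization.inr_mul, ← Unitization.quasispectrum_eq_spectrum_inr] at h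

lemma norm_le_norm_add_star_div_two_of_mul_star_self_eq {c u v k l : A}
    (huv : c * star c = u * v) (hvu : v * u = k * l) : ‖c‖ ≤ ‖k + star l‖ / 2 := by
  have hc := norm_sq_mem_quasispectrum_mul_star_self c
  rw [huv, quasispectrum.mul_comm, hvu] at hc
  have hsq : ‖c‖ ^ 2 ≤ (‖k + star l‖ / 2) ^ 2 := by
    have := re_le_of_mem_quasispectrum_mul hc
    rw [Complex.ofReal_re] at this
    linarith
  exact le_of_sq_le_sq hsq (by positivity)

lemma norm_mul_le_norm_star_mul_self_add_mul_star_self_div_two (x y : A) :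
    ‖x * y‖ ≤ ‖star x * x + y * star y‖ / 2 := by
  have huv : x * y * star (x * y) = x * (y * star y * star x) := by
    simp only [star_mul, mul_assoc]
  have hvu : y * star y * star x * x = y * star y * (star x * x) := mul_assoc _ _ _
  simpa only [star_mul, star_star, add_comm] using
    norm_le_norm_add_star_div_two_of_mul_star_self_eq huv hvu

lemma norm_star_mul_self_mul_mul_star_self_le (p q : A) :
    ‖star p * p * (q * star q)‖ ≤ ‖p * (star p * p + q * star q) * q‖ / 2 := by
  set c := star p * p * (q * star q) with hc
  have huv : c * star c = star p * (p * q * star q * q * star q * star p * p) := by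
    simp only [hc, star_mul, star_star, mul_assoc]
  have hvu : p * q * star q * q * star q * star p * p * star p =
      p * q * star q * q * (star q * star p * p * star p) := by
    simp only [mul_assoc]
  have hkl : p * q * star q * q + star (star q * star p * p * star p) =
      p * (star p * p + q * star q) * q := by
    simp only [star_mul, star_star, mul_add, add_mul, mul_assoc, add_comm]
  exact hkl ▸ norm_le_norm_add_star_div_two_of_mul_star_self_eq huv hvu

lemma norm_mul_star_mul_self_mul_le (p q w : A) :
    ‖p * (star w * w) * q‖ ≤ ‖w * (star p * p + q * star q) * star w‖ / 2 := by
  have h := norm_mul_le_norm_star_mul_self_add_mul_star_self_div_two (p * star w) (w * q)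
  simpa only [star_mul, star_star, mul_add, add_mul, mul_assoc] using h

lemma norm_mul_star_mul_self_mul_star {R : Type*} [NonUnitalNormedRing R] [StarRing R]
    [CStarRing R] (w : R) :
    ‖w * (star w * w) * star w‖ = ‖star w * w‖ ^ 2 := by
  rw [show w * (star w * w) * star w = w * star w * (w * star w) by simp only [mul_assoc],
    (IsSelfAdjoint.mul_star_self w).norm_mul_self, CStarRing.norm_self_mul_star,
    CStarRing.norm_star_mul_self]

theorem norm_mul_le_of_positive_general [PartialOrder A] [StarOrderedRing A] {a b : A}
    (ha : 0 ≤ a) (hb : 0 ≤ b) : ‖a * b‖ ≤ (1 / 4) * ‖a + b‖ ^ 2 := by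
  obtain ⟨w, hw⟩ := CStarAlgebra.nonneg_iff_eq_star_mul_self.1 (add_nonneg ha hb)
  obtain ⟨p, rfl⟩ := CStarAlgebra.nonneg_iff_eq_star_mul_self.1 ha
  obtain ⟨q, rfl⟩ := CStarAlgebra.nonneg_iff_eq_mul_star_self.1 hb
  calc ‖star p * p * (q * star q)‖ ≤ ‖p * (star p * p + q * star q) * q‖ / 2 :=
        norm_star_mul_self_mul_mul_star_self_le p q
    _ = ‖p * (star w * w) * q‖ / 2 := by rw [hw]
    _ ≤ ‖w * (star p * p + q * star q) * star w‖ / 2 / 2 := by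
        gcongr
        exact norm_mul_star_mul_self_mul_le p q w
    _ = (1 / 4) * ‖star p * p + q * star q‖ ^ 2 := by
        rw [hw, norm_mul_star_mul_self_mul_star]
        ring

end NonUnital

/-- For positive (semidefinite) operators `A` and `B` on a complex Hilbert space,
the operator norm satisfies `‖A B‖ ≤ (1/4) ‖A + B‖ ^ 2`. -/
theorem norm_mul_le_of_positive
    {H : Type*} [NormedAddCommGroup H] [InnerProductSpace ℂ H] [CompleteSpace H]
    (A B : H →L[ℂ] H) (hA : 0 ≤ A) (hB : 0 ≤ B) :
    ‖A * B‖ ≤ (1 / 4) * ‖A + B‖ ^ 2 :=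
  norm_mul_le_of_positive_general hA hB
end

section
/- Ando's inequality: for a positive unital linear map Φ, positive invertible operators A, B, and t ∈ [0,1], Φ(A #_t B) ≤ Φ(A) #_t Φ(B). -/
/-- The `t`-weighted geometric mean `A #_t B = A^{1/2} (A^{-1/2} B A^{-1/2})^t A^{1/2}`,
defined via the continuous functional calculus real power. -/
noncomputable def geomMean {H : Type*} [NormedAddCommGroup H] [InnerProductSpace ℂ H]
    [CompleteSpace H] (A B : H →L[ℂ] H) (t : ℝ) : H →L[ℂ] H :=
  A ^ ((1 : ℝ) / 2) * (A ^ (-(1 : ℝ) / 2) * B * A ^ (-(1 : ℝ) / 2)) ^ t * A ^ ((1 : ℝ) / 2)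

/-!
Put `X = A ^ (-1 / 2) B A ^ (-1 / 2)`. Conjugation by `Φ(A) ^ (-1 / 2)` turns the claim into
`Ψ (X ^ t) ≤ Ψ(X) ^ t` for the unital positive map
`Ψ x = Φ(A) ^ (-1 / 2) Φ(A ^ (1 / 2) x A ^ (1 / 2)) Φ(A) ^ (-1 / 2)`.
The Bernstein polynomials of degree `n ≥ 1` are nonnegative, sum to `1` and reproduce `x ↦ x`, so
`Ψ (f X)` is a limit of sums `∑ f (wᵢ) Pᵢ` with `Pᵢ ≥ 0`, `∑ Pᵢ = 1` and `∑ wᵢ Pᵢ = Ψ X`. For such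
sums the integral representation of `x ^ t` reduces the inequality to `f x = x⁻¹`, where, with
`T = (∑ wᵢ Pᵢ)⁻¹`, the gap `∑ wᵢ⁻¹ Pᵢ - T = ∑ wᵢ⁻¹ (1 - wᵢ T) Pᵢ (1 - wᵢ T)` is a sum of
positive terms. Only the commutative algebra generated by `X` enters, so positivity of `Φ` suffices.
-/

section

open Set Filter MeasureTheory
open scoped Ring unitInterval

section RpowIntegral

variable {B : Type*} [CStarAlgebra B] [PartialOrder B] [StarOrderedRing B]

theorem cfc_rpowIntegrand₀₁_eq {p t : ℝ} (ht : 0 < t) {b : B} (hb : 0 ≤ b) :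
    cfc (Real.rpowIntegrand₀₁ p t) b =
      t ^ p • (algebraMap ℝ B t⁻¹ - (algebraMap ℝ B t + b)⁻¹ʳ) := by
  have hne : ∀ x ∈ spectrum ℝ b, t + x ≠ 0 := fun x hx ↦
    (add_pos_of_pos_of_nonneg ht (spectrum_nonneg_of_nonneg hb hx)).ne'
  have hinv : ContinuousOn (fun x : ℝ ↦ (t + x)⁻¹) (spectrum ℝ b) :=
    (continuousOn_const.add continuousOn_id).inv₀ hne
  have hsub : ContinuousOn (fun x : ℝ ↦ t⁻¹ - (t + x)⁻¹) (spectrum ℝ b) :=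
    continuousOn_const.sub hinv
  change cfc (fun x : ℝ ↦ t ^ p * (t⁻¹ - (t + x)⁻¹)) b = _
  rw [cfc_const_mul _ _ b hsub, cfc_sub _ _ b continuousOn_const hinv,
    cfc_const .., cfc_inv _ _ hne .., cfc_const_add .., cfc_id' ..]

variable (B) in
theorem exists_measure_rpow_eq_setIntegral_cfc_rpowIntegrand₀₁ {p : ℝ} (hp : p ∈ Ioo 0 1) :
    ∃ μ : Measure ℝ, ∀ b : B, 0 ≤ b →
      IntegrableOn (fun t ↦ cfc (Real.rpowIntegrand₀₁ p t) b) (Ioi 0) μ ∧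
        b ^ p = ∫ t in Ioi 0, cfc (Real.rpowIntegrand₀₁ p t) b ∂μ := by
  lift p to NNReal using hp.1.le
  have hp0 : 0 < p := NNReal.coe_pos.1 hp.1
  obtain ⟨μ, hμ⟩ := CFC.exists_measure_nnrpow_eq_integral_cfcₙ_rpowIntegrand₀₁ B
    (p := p) ⟨hp0, NNReal.coe_lt_one.1 hp.2⟩
  refine ⟨μ, fun b hb ↦ ?_⟩
  have hcfc : EqOn (fun t ↦ cfcₙ (Real.rpowIntegrand₀₁ p t) b)
      (fun t ↦ cfc (Real.rpowIntegrand₀₁ p t) b) (Ioi 0) := fun t ht ↦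
    cfcₙ_eq_cfc ((Real.continuousOn_rpowIntegrand₀₁_Ici hp ht).mono fun x hx ↦
      quasispectrum_nonneg_of_nonneg b hb x hx) Real.rpowIntegrand₀₁_zero_right
  obtain ⟨hint, heq⟩ := hμ b hb
  refine ⟨hint.congr_fun hcfc measurableSet_Ioi, ?_⟩
  rw [← setIntegral_congr_fun measurableSet_Ioi hcfc, ← heq, CFC.nnrpow_eq_rpow hp0]

end RpowIntegral

section FiniteJensen

variable {B ι : Type*} [CStarAlgebra B] [PartialOrder B] [StarOrderedRing B] [Fintype ι]
  {P : ι → B} {w : ι → ℝ}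

theorem isStrictlyPositive_sum_smul (hP : ∀ i, 0 ≤ P i) (hP1 : ∑ i, P i = 1)
    (hw : ∀ i, 0 < w i) : IsStrictlyPositive (∑ i, w i • P i) := by
  obtain ⟨r, hr, hrw⟩ : ∃ r > 0, ∀ i, r ≤ w i := by
    cases isEmpty_or_nonempty ι
    · exact ⟨1, one_pos, isEmptyElim⟩
    · obtain ⟨j, hj⟩ := Finite.exists_min w
      exact ⟨w j, hw j, hj⟩
  refine IsStrictlyPositive.of_le (a := algebraMap ℝ B r) (by cfc_tac) ?_
  rw [Algebra.algebraMap_eq_smul_one, ← hP1, Finset.smul_sum]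
  exact Finset.sum_le_sum fun i _ ↦ smul_le_smul_of_nonneg_right (hrw i) (hP i)

theorem ringInverse_sum_smul_le_sum_inv_smul (hP : ∀ i, 0 ≤ P i) (hP1 : ∑ i, P i = 1)
    (hw : ∀ i, 0 < w i) : (∑ i, w i • P i)⁻¹ʳ ≤ ∑ i, (w i)⁻¹ • P i := by
  have hS := isStrictlyPositive_sum_smul hP hP1 hw
  set S := ∑ i, w i • P i with hS_def
  set T := S⁻¹ʳ
  have hT : star T = T := hS.ringInverse.isSelfAdjoint.star_eq
  have hST : S * T = 1 := Ring.mul_inverse_cancel _ hS.isUnit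
  have expand (i : ι) : (w i)⁻¹ • (star (1 - w i • T) * P i * (1 - w i • T)) =
      (w i)⁻¹ • P i - T * P i - P i * T + T * (w i • P i) * T := by
    have hwi := (hw i).ne'
    simp only [star_sub, star_one, star_smul, hT, star_trivial, sub_mul, mul_sub, one_mul,
      mul_one, smul_mul_assoc, mul_smul_comm, smul_sub, smul_smul, inv_mul_cancel₀ hwi, one_smul]
    rw [inv_mul_cancel_left₀ hwi]
    abel
  have sum_squares : ∑ i, (w i)⁻¹ • (star (1 - w i • T) * P i * (1 - w i • T)) =
      ∑ i, (w i)⁻¹ • P i - T := by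
    simp only [expand, Finset.sum_add_distrib, Finset.sum_sub_distrib, ← Finset.mul_sum,
      ← Finset.sum_mul, hP1, ← hS_def]
    rw [mul_assoc, hST, one_mul, mul_one, sub_add_cancel]
  rw [← sub_nonneg, ← sum_squares]
  exact Finset.sum_nonneg fun i _ ↦
    smul_nonneg (inv_nonneg.2 (hw i).le) (star_left_conjugate_nonneg (hP i) _)

theorem sum_rpowIntegrand₀₁_smul_le_cfc (hP : ∀ i, 0 ≤ P i) (hP1 : ∑ i, P i = 1)
    (hw : ∀ i, 0 ≤ w i) {p t : ℝ} (ht : 0 < t) :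
    ∑ i, Real.rpowIntegrand₀₁ p t (w i) • P i ≤
      cfc (Real.rpowIntegrand₀₁ p t) (∑ i, w i • P i) := by
  have hS : 0 ≤ ∑ i, w i • P i := Finset.sum_nonneg fun i _ ↦ smul_nonneg (hw i) (hP i)
  have shift : algebraMap ℝ B t + ∑ i, w i • P i = ∑ i, (t + w i) • P i := by
    simp only [add_smul, Finset.sum_add_distrib, ← Finset.smul_sum, hP1,
      Algebra.algebraMap_eq_smul_one]
  calc ∑ i, Real.rpowIntegrand₀₁ p t (w i) • P i
      = t ^ p • (algebraMap ℝ B t⁻¹ - ∑ i, (t + w i)⁻¹ • P i) := by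
        simp only [Real.rpowIntegrand₀₁, mul_smul, sub_smul, ← Finset.smul_sum,
          Finset.sum_sub_distrib, hP1, Algebra.algebraMap_eq_smul_one]
    _ ≤ t ^ p • (algebraMap ℝ B t⁻¹ - (algebraMap ℝ B t + ∑ i, w i • P i)⁻¹ʳ) := by
        rw [shift]
        gcongr
        exact ringInverse_sum_smul_le_sum_inv_smul hP hP1 fun i ↦
          add_pos_of_pos_of_nonneg ht (hw i)
    _ = cfc (Real.rpowIntegrand₀₁ p t) (∑ i, w i • P i) := (cfc_rpowIntegrand₀₁_eq ht hS).symm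

theorem sum_rpow_smul_le_rpow_sum_smul (hP : ∀ i, 0 ≤ P i) (hP1 : ∑ i, P i = 1)
    (hw : ∀ i, 0 ≤ w i) {p : ℝ} (hp : p ∈ Icc 0 1) :
    ∑ i, w i ^ p • P i ≤ (∑ i, w i • P i) ^ p := by
  have hS : 0 ≤ ∑ i, w i • P i := Finset.sum_nonneg fun i _ ↦ smul_nonneg (hw i) (hP i)
  obtain rfl | hp0 := hp.1.eq_or_lt
  · simp [hP1, CFC.rpow_zero _ hS]
  obtain rfl | hp1 := hp.2.eq_or_lt
  · simp [CFC.rpow_one _ hS]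
  obtain ⟨μ, hμ⟩ := exists_measure_rpow_eq_setIntegral_cfc_rpowIntegrand₀₁ B ⟨hp0, hp1⟩
  have hscalar (i : ι) :
      IntegrableOn (fun t ↦ Real.rpowIntegrand₀₁ p t (w i) • P i) (Ioi 0) μ ∧
        w i ^ p • P i = ∫ t in Ioi 0, Real.rpowIntegrand₀₁ p t (w i) • P i ∂μ := by
    obtain ⟨hint, heq⟩ := hμ (algebraMap ℝ B (w i)) (algebraMap_nonneg B (hw i))
    simp only [cfc_algebraMap, CFC.rpow_eq_cfc_real (algebraMap_nonneg B (hw i))] at hint heq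
    simp only [Algebra.smul_def]
    refine ⟨hint.mul_const _, ?_⟩
    rw [heq]
    exact (integral_mul_const_of_integrable hint).symm
  obtain ⟨hSint, hSeq⟩ := hμ _ hS
  rw [hSeq, Finset.sum_congr rfl fun i _ ↦ (hscalar i).2,
    ← integral_finsetSum _ fun i _ ↦ (hscalar i).1]
  exact setIntegral_mono_on (integrable_finsetSum _ fun i _ ↦ (hscalar i).1) hSint
    measurableSet_Ioi fun t ht ↦ sum_rpowIntegrand₀₁_smul_le_cfc hP hP1 hw ht

end FiniteJensen

section Bernstein

theorem sum_bernstein (n : ℕ) : ∑ k : Fin (n + 1), bernstein n k = 1 := by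
  ext x
  simp

theorem sum_z_smul_bernstein {n : ℕ} (hn : n ≠ 0) :
    ∑ k : Fin (n + 1), (bernstein.z k : ℝ) • bernstein n k = (ContinuousMap.id ℝ).restrict I := by
  ext x
  have hmean := congrArg (Polynomial.eval (x : ℝ)) (bernsteinPolynomial.sum_smul ℝ n)
  simp only [Finset.sum_range, Polynomial.eval_finsetSum, nsmul_eq_mul, Polynomial.eval_mul,
    Polynomial.eval_natCast, Polynomial.eval_X] at hmean
  simp only [bernstein, bernstein.z, ContinuousMap.coe_sum, Finset.sum_apply, smul_eq_mul,
    Polynomial.toContinuousMapOn_apply, div_mul_eq_mul_div, ← Finset.sum_div,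
    Polynomial.toContinuousMap_apply, ContinuousMap.coe_smul, Pi.smul_apply, hmean]
  simp [hn]

theorem bernsteinApproximation_eq_sum_smul (n : ℕ) (g : C(I, ℝ)) :
    bernsteinApproximation n g = ∑ k : Fin (n + 1), g (bernstein.z k) • bernstein n k := by
  ext x
  simp [bernsteinApproximation.apply, mul_comm]

theorem map_le_of_forall_sum_smul_le {E : Type*} [AddCommMonoid E] [Module ℝ E]
    [TopologicalSpace E] [Preorder E] [ClosedIicTopology E] (φ : C(I, ℝ) →L[ℝ] E)
    (hφ : ∀ f, 0 ≤ f → 0 ≤ φ f) (g : C(I, ℝ)) {b : E}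
    (h : ∀ (n : ℕ) (P : Fin n → E) (w : Fin n → I), (∀ i, 0 ≤ P i) → ∑ i, P i = φ 1 →
      ∑ i, (w i : ℝ) • P i = φ ((ContinuousMap.id ℝ).restrict I) → ∑ i, g (w i) • P i ≤ b) :
    φ g ≤ b := by
  refine le_of_tendsto ((φ.continuous.tendsto g).comp (bernsteinApproximation_uniform g)) ?_
  filter_upwards [eventually_ne_atTop 0] with n hn
  simp only [Function.comp_apply, bernsteinApproximation_eq_sum_smul, map_sum, map_smul]
  refine h (n + 1) _ bernstein.z (fun k ↦ hφ _ fun x ↦ bernstein_nonneg) ?_ ?_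
  · rw [← map_sum, sum_bernstein]
  · simp only [← map_smul, ← map_sum, sum_z_smul_bernstein hn]

end Bernstein

section PositiveMap

variable {A B : Type*} [CStarAlgebra A] [PartialOrder A] [StarOrderedRing A]
  [CStarAlgebra B] [PartialOrder B] [StarOrderedRing B]

theorem isStrictlyPositive_map {Φ : A →ₚ[ℂ] B} (hΦ : Φ 1 = 1) {a : A}
    (ha : IsStrictlyPositive a) : IsStrictlyPositive (Φ a) := by
  cases subsingleton_or_nontrivial A
  · rw [Subsingleton.elim a 1, hΦ]
    exact isStrictlyPositive_one
  obtain ⟨r, hr, hra⟩ : ∃ r > 0, algebraMap ℝ A r ≤ a :=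
    (CFC.exists_pos_algebraMap_le_iff ha.isSelfAdjoint).2 fun x hx ↦ ha.spectrum_pos hx
  have hΦr : Φ (algebraMap ℝ A r) = algebraMap ℝ B r := by
    rw [Algebra.algebraMap_eq_smul_one, Algebra.algebraMap_eq_smul_one, ← hΦ]
    exact Φ.toLinearMap.map_smul_of_tower r 1
  exact .of_le (a := algebraMap ℝ B r) (by cfc_tac) (hΦr ▸ OrderHomClass.mono Φ hra)

/-- The positive map `g ↦ Φ (g (j a))` on `C(X, ℝ)`: functional calculus of `a` in the coordinate
`j` on its spectrum, followed by `Φ`. -/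
noncomputable def mapCfc (Φ : A →ₚ[ℂ] B) {a : A} (ha : IsSelfAdjoint a) {X : Type*}
    [TopologicalSpace X] (j : C(spectrum ℝ a, X)) : C(X, ℝ) →L[ℝ] B :=
  (⟨Φ.toLinearMap.restrictScalars ℝ, map_continuous Φ⟩ : A →L[ℝ] B) ∘L cfcL ha ∘L
    ⟨(ContinuousMap.compRightAlgHom ℝ ℝ j).toLinearMap, ContinuousMap.continuous_precomp j⟩

theorem mapCfc_nonneg (Φ : A →ₚ[ℂ] B) {a : A} (ha : IsSelfAdjoint a) {X : Type*}
    [TopologicalSpace X] (j : C(spectrum ℝ a, X)) {g : C(X, ℝ)} (hg : 0 ≤ g) :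
    0 ≤ mapCfc Φ ha j g :=
  map_nonneg Φ ((cfcHom_nonneg_iff ha).2 fun x ↦ hg (j x))

theorem mapCfc_eq_map_cfc (Φ : A →ₚ[ℂ] B) {a : A} (ha : IsSelfAdjoint a) {X : Type*}
    [TopologicalSpace X] (j : C(spectrum ℝ a, X)) {g : C(X, ℝ)} {f : ℝ → ℝ}
    (hf : ContinuousOn f (spectrum ℝ a)) (hgf : ∀ x, g (j x) = f x) :
    mapCfc Φ ha j g = Φ (cfc f a) := by
  rw [cfc_apply f a ha hf]
  exact congrArg (Φ ∘ cfcHom ha) (ContinuousMap.ext hgf)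

theorem exists_pos_forall_mem_spectrum_div_mem_unitInterval {a : A} (ha : 0 ≤ a) :
    ∃ c > 0, ∀ x ∈ spectrum ℝ a, x / c ∈ I := by
  refine ⟨‖a‖ * ‖(1 : A)‖ + 1, by positivity, fun x hx ↦ ?_⟩
  have hx0 : 0 ≤ x := spectrum_nonneg_of_nonneg ha hx
  have hxa : x ≤ ‖a‖ * ‖(1 : A)‖ := (le_abs_self x).trans (spectrum.norm_le_norm_mul_of_mem hx)
  exact ⟨by positivity, div_le_one_of_le₀ (by linarith) (by positivity)⟩

theorem map_cfc_le_cfc_map {Φ : A →ₚ[ℂ] B} (hΦ : Φ 1 = 1) {f : ℝ → ℝ}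
    (hf : ContinuousOn f (Ici 0))
    (hJensen : ∀ (n : ℕ) (P : Fin n → B) (w : Fin n → ℝ), (∀ i, 0 ≤ P i) → ∑ i, P i = 1 →
      (∀ i, 0 ≤ w i) → ∑ i, f (w i) • P i ≤ cfc f (∑ i, w i • P i))
    {a : A} (ha : 0 ≤ a) : Φ (cfc f a) ≤ cfc f (Φ a) := by
  have ha_sa : IsSelfAdjoint a := .of_nonneg ha
  obtain ⟨c, hc, hca⟩ := exists_pos_forall_mem_spectrum_div_mem_unitInterval ha
  let j : C(spectrum ℝ a, I) := ⟨fun x ↦ ⟨x / c, hca x x.2⟩, by fun_prop⟩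
  let g : C(I, ℝ) := ⟨fun y ↦ f (c * y), hf.comp_continuous (by fun_prop) fun y ↦
    mul_nonneg hc.le y.2.1⟩
  have map_g : mapCfc Φ ha_sa j g = Φ (cfc f a) :=
    mapCfc_eq_map_cfc Φ ha_sa j (hf.mono fun x hx ↦ spectrum_nonneg_of_nonneg ha hx) fun x ↦
      congrArg f (mul_div_cancel₀ (x : ℝ) hc.ne')
  have map_one : mapCfc Φ ha_sa j 1 = 1 := by
    rw [mapCfc_eq_map_cfc Φ ha_sa j (f := 1) continuousOn_const fun x ↦ rfl, cfc_one ℝ a, hΦ]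
  have map_id : c • mapCfc Φ ha_sa j ((ContinuousMap.id ℝ).restrict I) = Φ a := by
    rw [← map_smul, mapCfc_eq_map_cfc Φ ha_sa j (f := id) continuousOn_id fun x ↦
      mul_div_cancel₀ (x : ℝ) hc.ne', cfc_id ℝ a]
  rw [← map_g]
  refine map_le_of_forall_sum_smul_le _ (fun _ ↦ mapCfc_nonneg Φ ha_sa j) g
    fun n P w hP hP1 hPw ↦ ?_
  have hmean : ∑ i, (c * w i) • P i = Φ a := by
    simp only [mul_smul, ← Finset.smul_sum, hPw, map_id]
  rw [← hmean]
  exact hJensen n P _ hP (hP1.trans map_one) fun i ↦ mul_nonneg hc.le (w i).2.1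

theorem map_rpow_le_rpow_map {Φ : A →ₚ[ℂ] B} (hΦ : Φ 1 = 1) {a : A} (ha : 0 ≤ a) {p : ℝ}
    (hp : p ∈ Icc 0 1) : Φ (a ^ p) ≤ Φ a ^ p := by
  rw [CFC.rpow_eq_cfc_real ha, CFC.rpow_eq_cfc_real (map_nonneg Φ ha)]
  refine map_cfc_le_cfc_map hΦ (Real.continuous_rpow_const hp.1).continuousOn
    (fun n P w hP hP1 hw ↦ ?_) ha
  rw [← CFC.rpow_eq_cfc_real (Finset.sum_nonneg fun i _ ↦ smul_nonneg (hw i) (hP i))]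
  exact sum_rpow_smul_le_rpow_sum_smul hP hP1 hw hp

end PositiveMap

section GeometricMean

open CFC

variable {A B : Type*} [CStarAlgebra A] [PartialOrder A] [StarOrderedRing A]
  [CStarAlgebra B] [PartialOrder B] [StarOrderedRing B]

/-- The `t`-weighted geometric mean `a #_t b` in a C⋆-algebra, by the same formula as
`geomMean`. -/
noncomputable def weightedGeomMean (a b : A) (t : ℝ) : A :=
  a ^ ((1 : ℝ) / 2) * (a ^ (-(1 : ℝ) / 2) * b * a ^ (-(1 : ℝ) / 2)) ^ t * a ^ ((1 : ℝ) / 2)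

theorem weightedGeomMean_eq_conjSqrt {a : A} (ha : IsStrictlyPositive a) (b : A) (t : ℝ) :
    weightedGeomMean a b t = conjSqrt a (conjSqrt a⁻¹ʳ b ^ t) := by
  have hinv : sqrt a⁻¹ʳ = a ^ (-(1 : ℝ) / 2) := by
    rw [sqrt_ringInverse, sqrt_eq_rpow, inverse_rpow a _ one_half_pos.ne', neg_div]
  rw [weightedGeomMean, conjSqrt_apply, conjSqrt_apply, hinv, sqrt_eq_rpow]

/-- The positive map `x ↦ Φ(a)^{-1/2} Φ(a^{1/2} x a^{1/2}) Φ(a)^{-1/2}`, which is unital when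
`Φ a` is strictly positive. -/
noncomputable def normalizedMap (Φ : A →ₚ[ℂ] B) (a : A) : A →ₚ[ℂ] B :=
  .mk₀ (LinearMap.mulLeftRight ℂ (sqrt (Φ a)⁻¹ʳ, sqrt (Φ a)⁻¹ʳ) ∘ₗ Φ.toLinearMap ∘ₗ
    LinearMap.mulLeftRight ℂ (sqrt a, sqrt a)) fun _ hx ↦
      (sqrt_nonneg _).isSelfAdjoint.conjugate_nonneg
        (map_nonneg Φ ((sqrt_nonneg a).isSelfAdjoint.conjugate_nonneg hx))

theorem normalizedMap_apply (Φ : A →ₚ[ℂ] B) (a x : A) :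
    normalizedMap Φ a x = conjSqrt (Φ a)⁻¹ʳ (Φ (conjSqrt a x)) :=
  rfl

theorem normalizedMap_one {Φ : A →ₚ[ℂ] B} {a : A} (ha : 0 ≤ a)
    (hΦa : IsStrictlyPositive (Φ a)) : normalizedMap Φ a 1 = 1 := by
  rw [normalizedMap_apply, conjSqrt_one a, conjSqrt_ringInverse_self (Φ a)]

theorem ando_inequality_general {Φ : A →ₚ[ℂ] B} (hΦ : Φ 1 = 1) {a b : A}
    (ha : IsStrictlyPositive a) (hb : 0 ≤ b) {t : ℝ} (ht : t ∈ Icc 0 1) :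
    Φ (weightedGeomMean a b t) ≤ weightedGeomMean (Φ a) (Φ b) t := by
  have hΦa : IsStrictlyPositive (Φ a) := isStrictlyPositive_map hΦ ha
  have hx : 0 ≤ conjSqrt a⁻¹ʳ b := by simpa using conjSqrt_le_conjSqrt (c := a⁻¹ʳ) hb
  calc Φ (weightedGeomMean a b t)
      = conjSqrt (Φ a) (normalizedMap Φ a (conjSqrt a⁻¹ʳ b ^ t)) := by
        rw [weightedGeomMean_eq_conjSqrt ha, normalizedMap_apply,
          conjSqrt_conjSqrt_ringInverse (Φ a)]
    _ ≤ conjSqrt (Φ a) (normalizedMap Φ a (conjSqrt a⁻¹ʳ b) ^ t) :=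
        conjSqrt_le_conjSqrt (map_rpow_le_rpow_map (normalizedMap_one ha.nonneg hΦa) hx ht)
    _ = weightedGeomMean (Φ a) (Φ b) t := by
        rw [normalizedMap_apply, conjSqrt_conjSqrt_ringInverse a, weightedGeomMean_eq_conjSqrt hΦa]

end GeometricMean

end

/-- Ando's inequality: for a positive unital linear map `Φ`, positive invertible
operators `A, B` and `t ∈ [0,1]`, one has `Φ(A #ₜ B) ≤ Φ(A) #ₜ Φ(B)`. -/
theorem ando_inequality
    {H K : Type*} [NormedAddCommGroup H] [InnerProductSpace ℂ H] [CompleteSpace H]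
    [NormedAddCommGroup K] [InnerProductSpace ℂ K] [CompleteSpace K]
    (Φ : (H →L[ℂ] H) →ₗ[ℂ] (K →L[ℂ] K))
    (hΦ1 : Φ 1 = 1) (hΦpos : ∀ a : H →L[ℂ] H, 0 ≤ a → 0 ≤ Φ a)
    (A B : H →L[ℂ] H) (hA : 0 ≤ A) (hB : 0 ≤ B)
    (hAinv : Invertible A) (hBinv : Invertible B)
    (t : ℝ) (ht0 : 0 ≤ t) (ht1 : t ≤ 1) :
    Φ (geomMean A B t) ≤ geomMean (Φ A) (Φ B) t := by
  exact ando_inequality_general (Φ := .mk₀ Φ hΦpos) hΦ1 ⟨hA, isUnit_of_invertible A⟩ hB ⟨ht0, ht1⟩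
end

section
/- Let A, B be positive invertible operators with m·I ≤ A, B ≤ M·I for 0 < m < M, let t ∈ (0,1), and let p ≥ 2. Then ((1−t)A + tB)^p ≤ ((m+M)^{2p}/(16 m^p M^p)) · (A #_t B)^p. -/
/-!
The weighted arithmetic-geometric mean inequality for `A⁻¹`, `B⁻¹` gives
`(A #_t B)⁻¹ ≤ (1 - t) A⁻¹ + t B⁻¹`. Together with `a + m M a⁻¹ ≤ m + M` for `m ≤ a ≤ M` it yields
`P + Q ≤ s`, where `P = (1 - t) A + t B`, `Q = m M (A #_t B)⁻¹` and `s = m + M`. For `r = p / 2 ≥ 1`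
the bounds `P, Q ≤ s` improve this to `P ^ r + Q ^ r ≤ s ^ (r - 1) (P + Q) ≤ s ^ r`. The
Bhatia–Kittaneh inequality `‖X Y‖ ≤ ‖X + Y‖² / 4` for positive `X`, `Y` then bounds
`‖P ^ r Q ^ r‖` by `s ^ p / 4`, which is the same as `P ^ p ≤ (s ^ p / 4)² Q ^ (-p)`.

For the Bhatia–Kittaneh inequality, fix unit vectors `x`, `y` and put `u = Y x`, `v = X y`. By
Cauchy–Schwarz for positive forms, `u u* / ‖u‖ ≤ Y` and `v v* / ‖v‖ ≤ X`, so bounding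
`⟪X Y x, y⟫ = ⟪u, v⟫` becomes a problem about two rank-one operators in the span of `u` and `v`.
-/

section InnerProductSpace

open RCLike
open scoped InnerProductSpace

variable {𝕜 E : Type*} [RCLike 𝕜] [NormedAddCommGroup E] [InnerProductSpace 𝕜 E]

theorem norm_inner_apply_sq_le_of_isPositive {T : E →ₗ[𝕜] E} (hT : T.IsPositive) (x y : E) :
    ‖⟪T x, y⟫_𝕜‖ ^ 2 ≤ re ⟪T x, x⟫_𝕜 * re ⟪T y, y⟫_𝕜 := by
  let core : PreInnerProductSpace.Core 𝕜 E :=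
    { inner := fun u v => ⟪T u, v⟫_𝕜
      conj_inner_symm := fun u v => by rw [inner_conj_symm, hT.isSymmetric]
      re_inner_nonneg := hT.re_inner_nonneg_left
      add_left := fun u v w => by rw [map_add, inner_add_left]
      smul_left := fun u v r => by rw [map_smul, inner_smul_left] }
  have symm : ‖⟪T x, y⟫_𝕜‖ = ‖⟪T y, x⟫_𝕜‖ := by rw [hT.isSymmetric, norm_inner_symm]
  calc ‖⟪T x, y⟫_𝕜‖ ^ 2 = ‖⟪T x, y⟫_𝕜‖ * ‖⟪T y, x⟫_𝕜‖ := by rw [← symm, sq]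
    _ ≤ re ⟪T x, x⟫_𝕜 * re ⟪T y, y⟫_𝕜 :=
      InnerProductSpace.Core.inner_mul_inner_self_le (c := core) x y

theorem norm_le_of_forall_norm_inner_sq_div_le {u : E} {s : ℝ} (hu : u ≠ 0)
    (h : ∀ z : E, ‖⟪u, z⟫_𝕜‖ ^ 2 / ‖u‖ ≤ s * ‖z‖ ^ 2) : ‖u‖ ≤ s := by
  have hu' : 0 < ‖u‖ := norm_pos_iff.2 hu
  have huu : ‖⟪u, u⟫_𝕜‖ = ‖u‖ ^ 2 := by simp [inner_self_eq_norm_sq_to_K]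
  have hle : (‖u‖ ^ 2) ^ 2 / ‖u‖ ≤ s * ‖u‖ ^ 2 := huu ▸ h u
  refine le_of_mul_le_mul_right ?_ (pow_pos hu' 2)
  calc ‖u‖ * ‖u‖ ^ 2 = (‖u‖ ^ 2) ^ 2 / ‖u‖ := by field_simp
    _ ≤ s * ‖u‖ ^ 2 := hle

theorem inner_left_inner_smul_add_smul (u v : E) (k : ℝ) :
    ⟪u, ⟪u, v⟫_𝕜 • u + (k : 𝕜) • v⟫_𝕜 = ((‖u‖ ^ 2 + k : ℝ) : 𝕜) * ⟪u, v⟫_𝕜 := by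
  rw [inner_add_right, inner_smul_right, inner_smul_right, inner_self_eq_norm_sq_to_K]
  push_cast
  ring

theorem inner_right_inner_smul_add_smul (u v : E) (k : ℝ) :
    ⟪v, ⟪u, v⟫_𝕜 • u + (k : 𝕜) • v⟫_𝕜 = ((‖⟪u, v⟫_𝕜‖ ^ 2 + k * ‖v‖ ^ 2 : ℝ) : 𝕜) := by
  rw [inner_add_right, inner_smul_right, inner_smul_right, inner_self_eq_norm_sq_to_K,
    ← inner_conj_symm v u, mul_conj]
  push_cast
  ring

theorem norm_inner_smul_add_smul_sq (u v : E) (k : ℝ) :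
    ‖⟪u, v⟫_𝕜 • u + (k : 𝕜) • v‖ ^ 2
      = ‖⟪u, v⟫_𝕜‖ ^ 2 * (‖u‖ ^ 2 + k) + k * (‖⟪u, v⟫_𝕜‖ ^ 2 + k * ‖v‖ ^ 2) := by
  rw [norm_add_sq (𝕜 := 𝕜), inner_smul_left, inner_smul_right, norm_smul, norm_smul, norm_ofReal,
    mul_left_comm, RCLike.conj_mul, ← ofReal_pow, ← ofReal_mul, ofReal_re, mul_pow, mul_pow, sq_abs]
  ring

theorem norm_inner_sq_le_of_rankOne_add_rankOne_le {u v : E} {s : ℝ} (hu : u ≠ 0) (hv : v ≠ 0)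
    (h : ∀ z : E, ‖⟪u, z⟫_𝕜‖ ^ 2 / ‖u‖ + ‖⟪v, z⟫_𝕜‖ ^ 2 / ‖v‖ ≤ s * ‖z‖ ^ 2) :
    ‖⟪u, v⟫_𝕜‖ ^ 2 ≤ ‖u‖ * (s - ‖u‖) * (‖v‖ * (s - ‖v‖)) := by
  have hu0 : 0 < ‖u‖ := norm_pos_iff.2 hu
  have hv0 : 0 < ‖v‖ := norm_pos_iff.2 hv
  have hus : ‖u‖ ≤ s := norm_le_of_forall_norm_inner_sq_div_le (𝕜 := 𝕜) hu fun z =>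
    (le_add_of_nonneg_right (by positivity)).trans (h z)
  have hs0 : 0 ≤ s := hu0.le.trans hus
  -- With this `k`, `⟪u, v⟫ • u + k • v` satisfies the `u`-component of the eigenvalue equation of
  -- `u u* / ‖u‖ + v v* / ‖v‖` for the eigenvalue `s`; `h` then bounds the `v`-component.
  set k : ℝ := ‖u‖ * (s - ‖u‖) with hk
  set D : ℝ := ‖⟪u, v⟫_𝕜‖ ^ 2 + k * ‖v‖ ^ 2 with hD
  have hk0 : 0 ≤ k := mul_nonneg hu0.le (sub_nonneg.2 hus)
  have hD0 : 0 ≤ D := by positivity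
  have huk : ‖u‖ ^ 2 + k = s * ‖u‖ := by rw [hk]; ring
  have hDD : D * D ≤ s * k * ‖v‖ * D := by
    have hz := h (⟪u, v⟫_𝕜 • u + (k : 𝕜) • v)
    rw [inner_left_inner_smul_add_smul, inner_right_inner_smul_add_smul,
      norm_inner_smul_add_smul_sq, ← hD, huk, norm_mul, norm_of_nonneg (by positivity),
      norm_of_nonneg hD0] at hz
    have hu_term : (s * ‖u‖ * ‖⟪u, v⟫_𝕜‖) ^ 2 / ‖u‖ = s ^ 2 * ‖u‖ * ‖⟪u, v⟫_𝕜‖ ^ 2 := by field_simp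
    have hv_term : D ^ 2 / ‖v‖ ≤ s * k * D := by linear_combination hz - hu_term
    rw [div_le_iff₀ hv0] at hv_term
    linear_combination hv_term
  have hD_le : D ≤ s * k * ‖v‖ := by
    rcases hD0.eq_or_lt with hD0 | hD0
    · rw [← hD0]
      positivity
    · exact le_of_mul_le_mul_right hDD hD0
  linear_combination hD_le

theorem norm_inner_le_sq_div_four_of_rankOne_add_rankOne_le {u v : E} {s : ℝ}
    (h : ∀ z : E, ‖⟪u, z⟫_𝕜‖ ^ 2 / ‖u‖ + ‖⟪v, z⟫_𝕜‖ ^ 2 / ‖v‖ ≤ s * ‖z‖ ^ 2) :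
    ‖⟪u, v⟫_𝕜‖ ≤ s ^ 2 / 4 := by
  rcases eq_or_ne u 0 with rfl | hu
  · simpa using by positivity
  rcases eq_or_ne v 0 with rfl | hv
  · simpa using by positivity
  have hvs : ‖v‖ ≤ s := norm_le_of_forall_norm_inner_sq_div_le (𝕜 := 𝕜) hv fun z =>
    (le_add_of_nonneg_left (by positivity)).trans (h z)
  have mul_sub_le (r : ℝ) : r * (s - r) ≤ s ^ 2 / 4 := by linarith [sq_nonneg (s - 2 * r)]
  refine le_of_sq_le_sq ?_ (by positivity)
  calc ‖⟪u, v⟫_𝕜‖ ^ 2 ≤ ‖u‖ * (s - ‖u‖) * (‖v‖ * (s - ‖v‖)) :=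
        norm_inner_sq_le_of_rankOne_add_rankOne_le hu hv h
    _ ≤ s ^ 2 / 4 * (s ^ 2 / 4) :=
        mul_le_mul (mul_sub_le _) (mul_sub_le _)
          (mul_nonneg (norm_nonneg v) (sub_nonneg.2 hvs)) (by positivity)
    _ = (s ^ 2 / 4) ^ 2 := (sq _).symm

theorem norm_inner_apply_sq_div_le_of_isPositive {T : E →ₗ[𝕜] E} (hT : T.IsPositive) {x : E}
    (hx : ‖x‖ ≤ 1) (z : E) : ‖⟪T x, z⟫_𝕜‖ ^ 2 / ‖T x‖ ≤ re ⟪T z, z⟫_𝕜 := by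
  have hz : 0 ≤ re ⟪T z, z⟫_𝕜 := hT.re_inner_nonneg_left z
  refine div_le_of_le_mul₀ (norm_nonneg _) hz ?_
  calc ‖⟪T x, z⟫_𝕜‖ ^ 2 ≤ re ⟪T x, x⟫_𝕜 * re ⟪T z, z⟫_𝕜 :=
        norm_inner_apply_sq_le_of_isPositive hT x z
    _ ≤ ‖T x‖ * re ⟪T z, z⟫_𝕜 := by
        gcongr
        exact (re_inner_le_norm _ _).trans (mul_le_of_le_one_right (norm_nonneg _) hx)
    _ = re ⟪T z, z⟫_𝕜 * ‖T x‖ := mul_comm _ _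

theorem norm_mul_le_norm_add_sq_div_four {P Q : E →L[𝕜] E} (hP : P.IsPositive)
    (hQ : Q.IsPositive) : ‖P * Q‖ ≤ ‖P + Q‖ ^ 2 / 4 := by
  refine ContinuousLinearMap.opNorm_le_of_re_inner_le (𝕜 := 𝕜) (by positivity) fun x y hx hy => ?_
  have hsum (z : E) :
      ‖⟪Q x, z⟫_𝕜‖ ^ 2 / ‖Q x‖ + ‖⟪P y, z⟫_𝕜‖ ^ 2 / ‖P y‖ ≤ ‖P + Q‖ * ‖z‖ ^ 2 :=
    calc ‖⟪Q x, z⟫_𝕜‖ ^ 2 / ‖Q x‖ + ‖⟪P y, z⟫_𝕜‖ ^ 2 / ‖P y‖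
        ≤ re ⟪Q z, z⟫_𝕜 + re ⟪P z, z⟫_𝕜 :=
          add_le_add (norm_inner_apply_sq_div_le_of_isPositive hQ hx.le z)
            (norm_inner_apply_sq_div_le_of_isPositive hP hy.le z)
      _ = re ⟪(P + Q) z, z⟫_𝕜 := by rw [add_apply, inner_add_left, map_add, add_comm]
      _ ≤ ‖(P + Q) z‖ * ‖z‖ := re_inner_le_norm _ _
      _ ≤ ‖P + Q‖ * ‖z‖ * ‖z‖ := by gcongr; exact (P + Q).le_opNorm z
      _ = ‖P + Q‖ * ‖z‖ ^ 2 := by ring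
  calc re ⟪P (Q x), y⟫_𝕜 = re ⟪Q x, P y⟫_𝕜 := by rw [hP.inner_left_eq_inner_right]
    _ ≤ ‖⟪Q x, P y⟫_𝕜‖ := re_le_norm _
    _ ≤ ‖P + Q‖ ^ 2 / 4 := norm_inner_le_sq_div_four_of_rankOne_add_rankOne_le hsum

end InnerProductSpace

section CStarAlgebra

open scoped Ring

variable {𝒜 : Type*} [CStarAlgebra 𝒜] [PartialOrder 𝒜] [StarOrderedRing 𝒜]

theorem smul_rpow_of_isStrictlyPositive {a : 𝒜} (ha : IsStrictlyPositive a) {r : ℝ} (hr : 0 < r)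
    (s : ℝ) : (r • a) ^ s = r ^ s • a ^ s := by
  have hpos : ∀ x ∈ spectrum ℝ a, 0 < x := fun x hx => ha.spectrum_pos hx
  have hcont : ContinuousOn (fun x : ℝ => x ^ s) (spectrum ℝ a) :=
    continuousOn_id.rpow_const fun x hx => Or.inl (hpos x hx).ne'
  calc (r • a) ^ s = cfc (fun x : ℝ => r * x) a ^ s := by
        rw [cfc_const_mul_id r a ha.isSelfAdjoint]
    _ = cfc (fun x : ℝ => (r * x) ^ s) a := CFC.cfc_rpow fun x hx => mul_pos hr (hpos x hx)
    _ = cfc (fun x : ℝ => r ^ s * x ^ s) a :=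
        cfc_congr fun x hx => Real.mul_rpow hr.le (hpos x hx).le
    _ = r ^ s • a ^ s := by rw [cfc_const_mul _ _ _ hcont, CFC.rpow_eq_cfc_real]

theorem rpow_neg_eq_ringInverse_rpow {a : 𝒜} (ha : IsStrictlyPositive a) (s : ℝ) :
    a ^ (-s) = a⁻¹ʳ ^ s := by
  rw [CFC.inverse_eq_rpow_neg_one, CFC.rpow_rpow _ _ _ (by norm_num), neg_one_mul]

theorem ringInverse_rpow {a : 𝒜} (ha : IsStrictlyPositive a) (s : ℝ) :
    a⁻¹ʳ ^ s = (a ^ s)⁻¹ʳ := by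
  rw [← rpow_neg_eq_ringInverse_rpow ha]
  exact (left_inv_eq_right_inv (Ring.inverse_mul_cancel _ (ha.rpow _ s).isUnit)
    (CFC.rpow_mul_rpow_neg s)).symm

theorem rpow_le_smul_of_le_smul_one {a : 𝒜} {s r : ℝ} (ha : 0 ≤ a) (has : a ≤ s • (1 : 𝒜))
    (hr : 1 ≤ r) : a ^ r ≤ s ^ (r - 1) • a := by
  have hle : ∀ x ∈ spectrum ℝ a, x ≤ s := by
    rwa [← Algebra.algebraMap_eq_smul_one, le_algebraMap_iff_spectrum_le] at has
  rw [CFC.rpow_eq_cfc_real, ← cfc_const_mul_id (s ^ (r - 1)) a]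
  refine cfc_mono (fun x hx => ?_)
    (continuousOn_id.rpow_const fun x _ => Or.inr (zero_le_one.trans hr)) (by fun_prop)
  have hx0 : 0 ≤ x := spectrum_nonneg_of_nonneg ha hx
  have hr0 : 0 ≤ r - 1 := sub_nonneg.2 hr
  calc x ^ r = x ^ (r - 1) * x := by
        rw [← Real.rpow_add_one' hx0 (by linarith), sub_add_cancel]
    _ ≤ s ^ (r - 1) * x := by
        gcongr
        exact hle x hx

theorem rpow_le_one_sub_smul_one_add_smul {a : 𝒜} (ha : 0 ≤ a) {t : ℝ} (ht0 : 0 ≤ t)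
    (ht1 : t ≤ 1) : a ^ t ≤ (1 - t) • (1 : 𝒜) + t • a := by
  rw [CFC.rpow_eq_cfc_real, ← Algebra.algebraMap_eq_smul_one, ← cfc_const_mul_id t a,
    ← cfc_const_add (1 - t) (t * ·) a]
  refine cfc_mono (fun x hx => ?_) (continuousOn_id.rpow_const fun x _ => Or.inr ht0)
    (by fun_prop)
  have := Real.geom_mean_le_arith_mean2_weighted (sub_nonneg.2 ht1) ht0 zero_le_one
    (spectrum_nonneg_of_nonneg ha hx) (sub_add_cancel 1 t)
  simpa using this

theorem isStrictlyPositive_of_smul_one_le {a : 𝒜} {m : ℝ} (hm : 0 < m) (h : m • (1 : 𝒜) ≤ a) :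
    IsStrictlyPositive a :=
  (isStrictlyPositive_one.smul hm).of_le h

theorem add_smul_ringInverse_le {a : 𝒜} {m M : ℝ} (hm : 0 < m) (hma : m • (1 : 𝒜) ≤ a)
    (haM : a ≤ M • (1 : 𝒜)) : a + (m * M) • a⁻¹ʳ ≤ (m + M) • (1 : 𝒜) := by
  have ha := isStrictlyPositive_of_smul_one_le hm hma
  have hx0 : ∀ x ∈ spectrum ℝ a, x ≠ 0 := fun x hx => (ha.spectrum_pos hx).ne'
  rw [← Algebra.algebraMap_eq_smul_one] at hma haM ⊢
  have hmx : ∀ x ∈ spectrum ℝ a, m ≤ x := (algebraMap_le_iff_le_spectrum).1 hma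
  have hxM : ∀ x ∈ spectrum ℝ a, x ≤ M := (le_algebraMap_iff_spectrum_le).1 haM
  have hinv : ContinuousOn (fun x : ℝ => x⁻¹) (spectrum ℝ a) := continuousOn_id.inv₀ hx0
  calc a + (m * M) • a⁻¹ʳ = cfc (fun x : ℝ => x + m * M * x⁻¹) a := by
        rw [cfc_add a (fun x => x) _, cfc_id' ℝ a, cfc_const_mul _ _ a hinv,
          cfc_ringInverse_id a ha.isUnit]
    _ ≤ algebraMap ℝ 𝒜 (m + M) := cfc_le_algebraMap _ _ a fun x hx => ?_
  have hx0 : 0 < x := ha.spectrum_pos hx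
  have hgap : 0 ≤ (x - m) * (M - x) * x⁻¹ :=
    mul_nonneg (mul_nonneg (sub_nonneg.2 (hmx x hx)) (sub_nonneg.2 (hxM x hx))) (inv_pos.2 hx0).le
  have hfactor : m + M - (x + m * M * x⁻¹) = (x - m) * (M - x) * x⁻¹ := by
    field_simp
    ring
  exact sub_nonneg.1 (hfactor ▸ hgap)

theorem rpow_le_smul_rpow_neg_of_norm_mul_le {a b : 𝒜} (ha : 0 ≤ a) (hb : IsStrictlyPositive b)
    {p c : ℝ} (hp : 0 ≤ p) (h : ‖a ^ (p / 2) * b ^ (p / 2)‖ ≤ c) :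
    a ^ p ≤ c ^ 2 • b ^ (-p) := by
  set x := a ^ (p / 2)
  set y := b ^ (p / 2)
  set z := b ^ (-(p / 2))
  have hx : star x = x := (CFC.rpow_nonneg : 0 ≤ x).isSelfAdjoint
  have hy : star y = y := (CFC.rpow_nonneg : 0 ≤ y).isSelfAdjoint
  have hz : 0 ≤ z := CFC.rpow_nonneg
  have hyz : y * z = 1 := CFC.rpow_mul_rpow_neg _
  have hzy : z * y = 1 := CFC.rpow_neg_mul_rpow _
  have hxx : a ^ p = x * x := by
    rw [← sq, ← CFC.rpow_natCast x 2, CFC.rpow_rpow_of_exponent_nonneg _ _ _ (by positivity)]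
    · norm_num
    · positivity
  have hzz : z * z = b ^ (-p) := by rw [← CFC.rpow_add hb.isUnit]; congr 1; ring
  have hyxxy : y * (x * x) * y ≤ c ^ 2 • (1 : 𝒜) := by
    calc y * (x * x) * y = star (x * y) * (x * y) := by rw [star_mul, hx, hy]; noncomm_ring
      _ ≤ ‖x * y‖ ^ 2 • (1 : 𝒜) := by
        rw [← Algebra.algebraMap_eq_smul_one]; exact CStarAlgebra.star_mul_le_algebraMap_norm_sq
      _ ≤ c ^ 2 • (1 : 𝒜) := by gcongr
  calc a ^ p = (z * y) * (x * x) * (y * z) := by rw [hxx, hzy, hyz, one_mul, mul_one]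
    _ = z * (y * (x * x) * y) * z := by noncomm_ring
    _ ≤ z * (c ^ 2 • (1 : 𝒜)) * z := conjugate_le_conjugate_of_nonneg hyxxy hz
    _ = c ^ 2 • b ^ (-p) := by rw [mul_smul_comm, smul_mul_assoc, mul_one, hzz]

theorem norm_rpow_add_rpow_le {a b : 𝒜} (ha : 0 ≤ a) (hb : 0 ≤ b) {s r : ℝ} (hs : 0 ≤ s)
    (hr : 1 ≤ r) (h : a + b ≤ s • (1 : 𝒜)) : ‖a ^ r + b ^ r‖ ≤ s ^ r := by
  have has : a ≤ s • (1 : 𝒜) := (le_add_of_nonneg_right hb).trans h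
  have hbs : b ≤ s • (1 : 𝒜) := (le_add_of_nonneg_left ha).trans h
  rw [CStarAlgebra.norm_le_iff_le_algebraMap _ (by positivity)
    (add_nonneg CFC.rpow_nonneg CFC.rpow_nonneg), Algebra.algebraMap_eq_smul_one]
  calc a ^ r + b ^ r ≤ s ^ (r - 1) • a + s ^ (r - 1) • b :=
        add_le_add (rpow_le_smul_of_le_smul_one ha has hr) (rpow_le_smul_of_le_smul_one hb hbs hr)
    _ = s ^ (r - 1) • (a + b) := (smul_add _ _ _).symm
    _ ≤ s ^ (r - 1) • s • (1 : 𝒜) := by gcongr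
    _ = s ^ r • (1 : 𝒜) := by
        rw [smul_smul, ← Real.rpow_add_one' hs (by linarith), sub_add_cancel]

end CStarAlgebra

section Operator

variable {H : Type*} [NormedAddCommGroup H] [InnerProductSpace ℂ H] [CompleteSpace H]

theorem rpow_le_smul_rpow_neg_of_add_le {P Q : H →L[ℂ] H} (hP : 0 ≤ P)
    (hQ : IsStrictlyPositive Q) {s p : ℝ} (hs : 0 ≤ s) (hp : 2 ≤ p)
    (h : P + Q ≤ s • (1 : H →L[ℂ] H)) : P ^ p ≤ (s ^ (2 * p) / 16) • Q ^ (-p) := by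
  have isPositive_rpow (T : H →L[ℂ] H) : (T ^ (p / 2)).IsPositive :=
    (ContinuousLinearMap.nonneg_iff_isPositive _).1 CFC.rpow_nonneg
  have hsq : (s ^ (p / 2)) ^ 2 = s ^ p := by
    rw [← Real.rpow_mul_natCast hs, Nat.cast_ofNat, div_mul_cancel₀ p two_ne_zero]
  have hmul : ‖P ^ (p / 2) * Q ^ (p / 2)‖ ≤ s ^ p / 4 :=
    calc ‖P ^ (p / 2) * Q ^ (p / 2)‖ ≤ ‖P ^ (p / 2) + Q ^ (p / 2)‖ ^ 2 / 4 :=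
          norm_mul_le_norm_add_sq_div_four (isPositive_rpow P) (isPositive_rpow Q)
      _ ≤ (s ^ (p / 2)) ^ 2 / 4 := by
          gcongr
          exact norm_rpow_add_rpow_le hP hQ.nonneg hs (by linarith) h
      _ = s ^ p / 4 := by rw [hsq]
  have hconst : (s ^ p / 4) ^ 2 = s ^ (2 * p) / 16 := by
    rw [div_pow, ← Real.rpow_mul_natCast hs, Nat.cast_ofNat, mul_comm p]
    norm_num
  exact hconst ▸ rpow_le_smul_rpow_neg_of_norm_mul_le hP hQ (by linarith) hmul

end Operator

section GeomMean

open scoped Ring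

variable {H : Type*} [NormedAddCommGroup H] [InnerProductSpace ℂ H] [CompleteSpace H]
  {A B : H →L[ℂ] H}

theorem geomMean_eq_conjSqrt (hA : IsStrictlyPositive A) (B : H →L[ℂ] H) (t : ℝ) :
    geomMean A B t = CFC.conjSqrt A (CFC.conjSqrt A⁻¹ʳ B ^ t) := by
  rw [CFC.conjSqrt_apply, CFC.conjSqrt_apply, CFC.sqrt_eq_rpow, CFC.sqrt_eq_rpow,
    ← rpow_neg_eq_ringInverse_rpow hA, geomMean, neg_div]

theorem isStrictlyPositive_geomMean (hA : IsStrictlyPositive A) (hB : IsStrictlyPositive B)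
    (t : ℝ) : IsStrictlyPositive (geomMean A B t) := by
  rw [geomMean_eq_conjSqrt hA, CFC.isStrictlyPositive_conjSqrt_iff _ _ hA]
  exact ((CFC.isStrictlyPositive_conjSqrt_iff _ _ hA.ringInverse).2 hB).rpow _ t

theorem ringInverse_geomMean (hA : IsStrictlyPositive A) (hB : IsStrictlyPositive B) (t : ℝ) :
    (geomMean A B t)⁻¹ʳ = geomMean A⁻¹ʳ B⁻¹ʳ t := by
  have hC : IsStrictlyPositive (CFC.conjSqrt A⁻¹ʳ B) :=
    (CFC.isStrictlyPositive_conjSqrt_iff _ _ hA.ringInverse).2 hB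
  rw [geomMean_eq_conjSqrt hA, geomMean_eq_conjSqrt hA.ringInverse, CFC.ringInverse_conjSqrt A _ hA,
    ← ringInverse_rpow hC, CFC.ringInverse_conjSqrt _ _ hA.ringInverse]

theorem geomMean_le_weighted_arith (hA : IsStrictlyPositive A) (hB : 0 ≤ B) {t : ℝ}
    (ht0 : 0 ≤ t) (ht1 : t ≤ 1) : geomMean A B t ≤ (1 - t) • A + t • B := by
  have hC : 0 ≤ CFC.conjSqrt A⁻¹ʳ B := by
    simpa using CFC.conjSqrt_le_conjSqrt (c := A⁻¹ʳ) hB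
  calc geomMean A B t = CFC.conjSqrt A (CFC.conjSqrt A⁻¹ʳ B ^ t) := geomMean_eq_conjSqrt hA B t
    _ ≤ CFC.conjSqrt A ((1 - t) • 1 + t • CFC.conjSqrt A⁻¹ʳ B) :=
        CFC.conjSqrt_le_conjSqrt (rpow_le_one_sub_smul_one_add_smul hC ht0 ht1)
    _ = (1 - t) • A + t • B := by
        rw [map_add, map_smul, map_smul, CFC.conjSqrt_one A hA.nonneg,
          CFC.conjSqrt_conjSqrt_ringInverse A B hA]

theorem weighted_arith_add_smul_ringInverse_geomMean_le {m M : ℝ} (hm : 0 < m) (hM : 0 ≤ M)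
    (hA1 : m • (1 : H →L[ℂ] H) ≤ A) (hA2 : A ≤ M • (1 : H →L[ℂ] H))
    (hB1 : m • (1 : H →L[ℂ] H) ≤ B) (hB2 : B ≤ M • (1 : H →L[ℂ] H))
    {t : ℝ} (ht0 : 0 ≤ t) (ht1 : t ≤ 1) :
    (1 - t) • A + t • B + (m * M) • (geomMean A B t)⁻¹ʳ ≤ (m + M) • (1 : H →L[ℂ] H) := by
  have hA := isStrictlyPositive_of_smul_one_le hm hA1
  have hB := isStrictlyPositive_of_smul_one_le hm hB1
  have harmonic : (geomMean A B t)⁻¹ʳ ≤ (1 - t) • A⁻¹ʳ + t • B⁻¹ʳ := by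
    rw [ringInverse_geomMean hA hB]
    exact geomMean_le_weighted_arith hA.ringInverse hB.ringInverse.nonneg ht0 ht1
  have ht : 0 ≤ 1 - t := sub_nonneg.2 ht1
  calc (1 - t) • A + t • B + (m * M) • (geomMean A B t)⁻¹ʳ
      ≤ (1 - t) • A + t • B + (m * M) • ((1 - t) • A⁻¹ʳ + t • B⁻¹ʳ) := by gcongr
    _ = (1 - t) • (A + (m * M) • A⁻¹ʳ) + t • (B + (m * M) • B⁻¹ʳ) := by module
    _ ≤ (1 - t) • (m + M) • (1 : H →L[ℂ] H) + t • (m + M) • (1 : H →L[ℂ] H) := by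
        gcongr
        · exact add_smul_ringInverse_le hm hA1 hA2
        · exact add_smul_ringInverse_le hm hB1 hB2
    _ = (m + M) • (1 : H →L[ℂ] H) := by module

end GeomMean

/-- For positive invertible `A, B` with `m • 1 ≤ A, B ≤ M • 1`, `0 < m < M`,
`t ∈ (0,1)` and real `p ≥ 2`,
`((1-t)A + tB)^p ≤ ((m+M)^{2p}/(16 m^p M^p)) • (A #ₜ B)^p`. -/
theorem weighted_arith_rpow_le_geomMean_rpow
    {H : Type*} [NormedAddCommGroup H] [InnerProductSpace ℂ H] [CompleteSpace H]
    (A B : H →L[ℂ] H) (hA : 0 ≤ A) (hB : 0 ≤ B)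
    (hAinv : Invertible A) (hBinv : Invertible B)
    (m M : ℝ) (hm : 0 < m) (hmM : m < M)
    (hA1 : m • (1 : H →L[ℂ] H) ≤ A) (hA2 : A ≤ M • (1 : H →L[ℂ] H))
    (hB1 : m • (1 : H →L[ℂ] H) ≤ B) (hB2 : B ≤ M • (1 : H →L[ℂ] H))
    (t : ℝ) (ht0 : 0 < t) (ht1 : t < 1) (p : ℝ) (hp : 2 ≤ p) :
    ((1 - t) • A + t • B) ^ p
      ≤ ((m + M) ^ (2 * p) / (16 * m ^ p * M ^ p)) • geomMean A B t ^ p := by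
  have hM : 0 < M := hm.trans hmM
  have hmM0 : 0 < m * M := mul_pos hm hM
  have hG : IsStrictlyPositive (geomMean A B t) :=
    isStrictlyPositive_geomMean (isStrictlyPositive_of_smul_one_le hm hA1)
      (isStrictlyPositive_of_smul_one_le hm hB1) t
  have hX : 0 ≤ (1 - t) • A + t • B :=
    add_nonneg (smul_nonneg (sub_nonneg.2 ht1.le) hA) (smul_nonneg ht0.le hB)
  have hconst : (m + M) ^ (2 * p) / 16 * (m * M) ^ (-p)
      = (m + M) ^ (2 * p) / (16 * m ^ p * M ^ p) := by
    rw [Real.rpow_neg hmM0.le, Real.mul_rpow hm.le hM.le, ← div_eq_mul_inv, div_div, mul_assoc]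
  calc ((1 - t) • A + t • B) ^ p
      ≤ ((m + M) ^ (2 * p) / 16) • ((m * M) • Ring.inverse (geomMean A B t)) ^ (-p) :=
        rpow_le_smul_rpow_neg_of_add_le hX (hG.ringInverse.smul hmM0) (add_pos hm hM).le hp
          (weighted_arith_add_smul_ringInverse_geomMean_le hm hM.le hA1 hA2 hB1 hB2 ht0.le ht1.le)
    _ = ((m + M) ^ (2 * p) / (16 * m ^ p * M ^ p)) • geomMean A B t ^ p := by
        rw [smul_rpow_of_isStrictlyPositive hG.ringInverse hmM0, ← rpow_neg_eq_ringInverse_rpow hG,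
          neg_neg, smul_smul, hconst]
end
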